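/- Let Φ and Ψ be a pair of complementary N-functions. Then there exist positive constants C and b such that ∫_{ℝⁿ} Φ(b M_f(z)) dz ≤ C ∫_{ℝⁿ} Φ(|f(z)|) dz for all f ∈ L*_Φ if and only if Ψ satisfies the Δ₂-condition on [0,∞). -/

import Mathlib

open Real MeasureTheory intervalIntegral

lemma mono_ii {g : ℝ → ℝ} (hg : MonotoneOn g (Set.Ici 0)) {a b : ℝ} (ha : 0 ≤ a) (hb : 0 ≤ b) :
    IntervalIntegrable g volume a b := by
  apply MonotoneOn.intervalIntegrable
  apply hg.mono
  intro x hx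
  rw [Set.mem_uIcc] at hx
  simp only [Set.mem_Ici]
  rcases hx with h | h <;> linarith [h.1]

lemma mono_ext {g : ℝ → ℝ} (hg : MonotoneOn g (Set.Ici 0)) : Monotone (fun x => g (max x 0)) :=
  fun a b hab => hg (le_max_right a 0) (le_max_right b 0) (max_le_max_right 0 hab)

lemma area_reg {g : ℝ → ℝ} (hg : MonotoneOn g (Set.Ici 0)) (h0 : ∀ x ≥ (0:ℝ), 0 ≤ g x)
    {t : ℝ} (ht : 0 ≤ t) :
    volume (regionBetween (fun _ => (0:ℝ)) g (Set.Ioc 0 t)) = ENNReal.ofReal (∫ s in (0:ℝ)..t, g s) := by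
  have h := volume_regionBetween_eq_integral (μ := (volume : Measure ℝ)) (f := fun _ => (0:ℝ))
    (g := g) (s := Set.Ioc 0 t)
    (by simp [integrableOn_const_iff]) 
    ((intervalIntegrable_iff_integrableOn_Ioc_of_le ht).1 (mono_ii hg le_rfl ht)) measurableSet_Ioc
    (fun x hx => h0 x hx.1.le)
  rw [intervalIntegral.integral_of_le ht, Measure.volume_eq_prod, h]
  simp

lemma area_swap (S : Set (ℝ × ℝ)) : volume (Prod.swap ⁻¹' S) = volume S := by
  have : MeasurePreserving (MeasurableEquiv.prodComm (α := ℝ) (β := ℝ)) volume volume :=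
    Measure.measurePreserving_swap
  exact this.measure_preimage_equiv S

lemma area_rect {t s : ℝ} (ht : 0 ≤ t) :
    volume ((Set.Ioc 0 t) ×ˢ (Set.Ioc 0 s) : Set (ℝ × ℝ)) = ENNReal.ofReal (t * s) := by
  rw [Measure.volume_eq_prod, Measure.prod_prod]
  simp [ENNReal.ofReal_mul ht]

lemma int_nonneg {g : ℝ → ℝ} (h0 : ∀ x ≥ (0:ℝ), 0 ≤ g x) {t : ℝ} (ht : 0 ≤ t) :
    0 ≤ ∫ s in (0:ℝ)..t, g s :=
  intervalIntegral.integral_nonneg ht (fun u hu => h0 u hu.1)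

lemma young_le {φ ψ : ℝ → ℝ} (hφ : MonotoneOn φ (Set.Ici 0)) (hψ : MonotoneOn ψ (Set.Ici 0))
    (hφ0 : ∀ x ≥ (0:ℝ), 0 ≤ φ x) (hψ0 : ∀ x ≥ (0:ℝ), 0 ≤ ψ x)
    (h1 : ∀ x ≥ (0:ℝ), ∀ y ≥ (0:ℝ), φ x ≤ y → x ≤ ψ y) {s t : ℝ} (hs : 0 ≤ s) (ht : 0 ≤ t) :
    t * s ≤ (∫ x in (0:ℝ)..t, φ x) + ∫ y in (0:ℝ)..s, ψ y := by
  have key : ∀ ε > (0:ℝ), t * s ≤ (∫ x in (0:ℝ)..t, φ x) + ((∫ y in (0:ℝ)..s, ψ y) + ε * s) := by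
    intro ε hε
    have hm : MonotoneOn (fun y => ψ y + ε) (Set.Ici 0) := fun a ha b hb hab => by
      simpa using hψ ha hb hab
    have hn : ∀ x ≥ (0:ℝ), 0 ≤ ψ x + ε := fun x hx => by linarith [hψ0 x hx]
    have e : (∫ y in (0:ℝ)..s, (ψ y + ε)) = (∫ y in (0:ℝ)..s, ψ y) + ε * s := by
      rw [intervalIntegral.integral_add (mono_ii hψ le_rfl hs) (by simp)]
      simp [mul_comm]
    rw [← e]
    have hsub : ((Set.Ioc 0 t) ×ˢ (Set.Ioc 0 s) : Set (ℝ × ℝ)) ⊆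
        regionBetween (fun _ => (0:ℝ)) φ (Set.Ioc 0 t) ∪
        Prod.swap ⁻¹' (regionBetween (fun _ => (0:ℝ)) (fun y => ψ y + ε) (Set.Ioc 0 s)) := by
      rintro ⟨x, y⟩ ⟨hx, hy⟩
      simp only at hx hy
      by_cases h : y < φ x
      · left; exact ⟨hx, hy.1, h⟩
      · right
        refine ⟨hy, hx.1, ?_⟩
        have := h1 x hx.1.le y hy.1.le (not_lt.1 h)
        simp only [Prod.swap]
        linarith
    have := (measure_mono (μ := volume) hsub).trans (measure_union_le _ _)
    rw [area_swap, area_rect ht, area_reg hφ hφ0 ht, area_reg hm hn hs,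
      ← ENNReal.ofReal_add (int_nonneg hφ0 ht) (int_nonneg hn hs)] at this
    exact (ENNReal.ofReal_le_ofReal_iff (add_nonneg (int_nonneg hφ0 ht) (int_nonneg hn hs))).1 this
  by_contra hc
  push Not at hc
  set d := t * s - ((∫ x in (0:ℝ)..t, φ x) + ∫ y in (0:ℝ)..s, ψ y) with hd
  have hdpos : 0 < d := by linarith
  have := key (d / (2 * (s + 1))) (by positivity)
  have h2 : d / (2 * (s + 1)) * s ≤ d / 2 := by
    rw [div_mul_eq_mul_div, div_le_div_iff₀ (by positivity) (by positivity)]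
    nlinarith
  linarith

lemma young_ge {φ ψ : ℝ → ℝ} (hφ : MonotoneOn φ (Set.Ici 0)) (hψ : MonotoneOn ψ (Set.Ici 0))
    (hφ0 : ∀ x ≥ (0:ℝ), 0 ≤ φ x) (hψ0 : ∀ x ≥ (0:ℝ), 0 ≤ ψ x)
    (h2 : ∀ x ≥ (0:ℝ), ∀ y ≥ (0:ℝ), x < ψ y → φ x ≤ y) {s t : ℝ} (hs : 0 ≤ s) (ht : 0 ≤ t)
    (hA : ∀ x ≥ (0:ℝ), x < t → φ x ≤ s) (hB : ∀ y ≥ (0:ℝ), y < s → ψ y ≤ t) :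
    (∫ x in (0:ℝ)..t, φ x) + (∫ y in (0:ℝ)..s, ψ y) ≤ t * s := by
  have a1 : (∫ x in (0:ℝ)..t, φ x) = ∫ x in (0:ℝ)..t, min (φ x) s := by
    apply intervalIntegral.integral_congr_ae_restrict
    rw [Set.uIoc_of_le ht, ← Measure.restrict_congr_set Ioo_ae_eq_Ioc]
    refine (ae_restrict_iff' measurableSet_Ioo).2 (Filter.Eventually.of_forall ?_)
    intro x hx
    exact (min_eq_left (hA x hx.1.le hx.2)).symm
  have a2 : (∫ x in (0:ℝ)..s, ψ x) = ∫ x in (0:ℝ)..s, min (ψ x) t := by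
    apply intervalIntegral.integral_congr_ae_restrict
    rw [Set.uIoc_of_le hs, ← Measure.restrict_congr_set Ioo_ae_eq_Ioc]
    refine (ae_restrict_iff' measurableSet_Ioo).2 (Filter.Eventually.of_forall ?_)
    intro x hx
    exact (min_eq_left (hB x hx.1.le hx.2)).symm
  have m1 : MonotoneOn (fun x => min (φ x) s) (Set.Ici 0) := fun a ha b hb hab =>
    min_le_min_right _ (hφ ha hb hab)
  have m2 : MonotoneOn (fun x => min (ψ x) t) (Set.Ici 0) := fun a ha b hb hab =>
    min_le_min_right _ (hψ ha hb hab)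
  have n1 : ∀ x ≥ (0:ℝ), 0 ≤ min (φ x) s := fun x hx => le_min (hφ0 x hx) hs
  have n2 : ∀ x ≥ (0:ℝ), 0 ≤ min (ψ x) t := fun x hx => le_min (hψ0 x hx) ht
  rw [a1, a2, ← ENNReal.ofReal_le_ofReal_iff (mul_nonneg ht hs),
    ENNReal.ofReal_add (int_nonneg n1 ht) (int_nonneg n2 hs), ← area_rect ht,
    ← area_reg m1 n1 ht, ← area_reg m2 n2 hs, ← area_swap (regionBetween _ _ (Set.Ioc 0 s))]
  rw [← measure_union₀']
  · apply measure_mono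
    rintro ⟨x, y⟩ (h | h)
    · exact ⟨h.1, h.2.1, h.2.2.le.trans (min_le_right _ _)⟩
    · exact ⟨⟨h.2.1, h.2.2.le.trans (min_le_right _ _)⟩, h.1⟩
  · have e : regionBetween (fun _ => (0:ℝ)) (fun x => min (φ x) s) (Set.Ioc 0 t) =
        regionBetween (fun _ => (0:ℝ)) (fun x => min (φ (max x 0)) s) (Set.Ioc 0 t) := by
      ext ⟨x, y⟩
      simp only [regionBetween, Set.mem_ofPred_eq]
      constructor
      · rintro ⟨hx, h⟩
        rw [← max_eq_left hx.1.le] at h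
        exact ⟨hx, h⟩
      · rintro ⟨hx, h⟩
        rw [max_eq_left hx.1.le] at h
        exact ⟨hx, h⟩
    rw [e]
    have hmm : Measurable (fun x => φ (max x 0)) := (mono_ext hφ).measurable
    exact (measurableSet_regionBetween measurable_const (hmm.min measurable_const)
      measurableSet_Ioc).nullMeasurableSet
  · apply Disjoint.aedisjoint
    rw [Set.disjoint_left]
    rintro ⟨x, y⟩ h h'
    have e1 : y < φ x := lt_of_lt_of_le h.2.2 (min_le_left _ _)
    have e2 : x < ψ y := lt_of_lt_of_le h'.2.2 (min_le_left _ _)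
    have := h2 x h.1.1.le y h'.1.1.le e2
    linarith

lemma vol_ball' {n : ℕ} (c : EuclideanSpace ℝ (Fin n)) {r : ℝ} (hr : 0 < r) :
    volume (Metric.ball c r) = ENNReal.ofReal (r ^ n) *
      volume (Metric.ball (0 : EuclideanSpace ℝ (Fin n)) 1) := by
  rw [Measure.addHaar_ball_of_pos volume c hr]; simp

lemma vol_cball' {n : ℕ} (c : EuclideanSpace ℝ (Fin n)) {r : ℝ} (hr : 0 < r) :
    volume (Metric.closedBall c r) = ENNReal.ofReal (r ^ n) *
      volume (Metric.ball (0 : EuclideanSpace ℝ (Fin n)) 1) := by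
  rw [Measure.addHaar_closedBall volume c hr.le]; simp

lemma vol_pos {n : ℕ} (c : EuclideanSpace ℝ (Fin n)) {r : ℝ} (hr : 0 < r) :
    volume (Metric.ball c r) ≠ 0 := (Metric.measure_ball_pos volume c hr).ne'

lemma vol_fin {n : ℕ} (c : EuclideanSpace ℝ (Fin n)) (r : ℝ) :
    volume (Metric.ball c r) ≠ ⊤ := measure_ball_lt_top.ne

lemma weak_cover {n : ℕ} (hn : 1 ≤ n) (g : EuclideanSpace ℝ (Fin n) → ENNReal) (s : ENNReal)
    (hs0 : s ≠ 0) (hst : s ≠ ⊤) (U : Set (EuclideanSpace ℝ (Fin n)))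
    (hU : ∀ x ∈ U, ∃ c : EuclideanSpace ℝ (Fin n), ∃ r : ℝ, 0 < r ∧ x ∈ Metric.ball c r ∧
      s * volume (Metric.ball c r) ≤ ∫⁻ y in Metric.ball c r, g y) :
    s * volume U ≤ ENNReal.ofReal (5 ^ n) * ∫⁻ y, g y := by
  set V := volume (Metric.ball (0 : EuclideanSpace ℝ (Fin n)) 1) with hV
  have hV0 : V ≠ 0 := vol_pos _ one_pos
  have hVt : V ≠ ⊤ := vol_fin _ _
  by_cases hI : ∫⁻ y, g y = ⊤
  · rw [hI, ENNReal.mul_top]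
    · exact le_top
    · simp
  have hU' : ∀ x : U, ∃ c : EuclideanSpace ℝ (Fin n), ∃ r : ℝ, 0 < r ∧ (x:EuclideanSpace ℝ (Fin n)) ∈ Metric.ball c r ∧
      s * volume (Metric.ball c r) ≤ ∫⁻ y in Metric.ball c r, g y := fun x => hU x x.2
  choose c r hr hx hb using hU'
  have hR : ∀ x ∈ (Set.univ : Set U), r x ≤ max 1 ((∫⁻ y, g y) / (s * V)).toReal := by
    intro x _
    by_cases h1 : r x ≤ 1
    · exact h1.trans (le_max_left _ _)
    · push Not at h1
      refine le_trans ?_ (le_max_right _ _)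
      have h2 : r x ≤ r x ^ n := le_self_pow₀ h1.le (by omega)
      refine h2.trans ?_
      have hfin : (∫⁻ y, g y) / (s * V) ≠ ⊤ := ENNReal.div_ne_top hI (mul_ne_zero hs0 hV0)
      rw [← ENNReal.ofReal_le_iff_le_toReal hfin]
      rw [ENNReal.le_div_iff_mul_le (Or.inl (mul_ne_zero hs0 hV0)) (Or.inl (ENNReal.mul_ne_top hst hVt))]
      have h3 := (hb x).trans (setLIntegral_le_lintegral _ _)
      rw [vol_ball' (c x) (hr x)] at h3
      calc _ = s * (ENNReal.ofReal (r x ^ n) * V) := by ring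
        _ ≤ _ := h3
  obtain ⟨u, -, hdis, hcov⟩ := Vitali.exists_disjoint_subfamily_covering_enlargement_closedBall
    (Set.univ : Set U) c r _ hR 5 (by norm_num)
  have hcount : u.Countable := hdis.countable_of_nonempty_interior fun i _ =>
    (Metric.nonempty_ball.2 (hr i)).mono Metric.ball_subset_interior_closedBall
  have hsub : U ⊆ ⋃ i ∈ u, Metric.closedBall (c i) (5 * r i) := by
    intro x hxU
    obtain ⟨b, hbu, hbs⟩ := hcov ⟨x, hxU⟩ (Set.mem_univ _)
    exact Set.mem_biUnion hbu (hbs (Metric.ball_subset_closedBall (hx ⟨x, hxU⟩)))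
  calc s * volume U ≤ s * ∑' i : u, volume (Metric.closedBall (c i) (5 * r i)) := by
        gcongr
        exact (measure_mono hsub).trans (measure_biUnion_le _ hcount _)
    _ = ∑' i : u, s * volume (Metric.closedBall (c i) (5 * r i)) := ENNReal.tsum_mul_left.symm
    _ ≤ ∑' i : u, ENNReal.ofReal (5 ^ n) * ∫⁻ y in Metric.closedBall (c i) (r i), g y := by
        refine ENNReal.tsum_le_tsum fun i => ?_
        rw [vol_cball' _ (by have := hr i; positivity), mul_pow, ENNReal.ofReal_mul (by positivity)]
        have h4 := (hb i).trans (lintegral_mono_set (Metric.ball_subset_closedBall))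
        rw [vol_ball' _ (hr i)] at h4
        calc _ = ENNReal.ofReal (5 ^ n) * (s * (ENNReal.ofReal (r i ^ n) * V)) := by ring
          _ ≤ _ := by gcongr
    _ = ENNReal.ofReal (5 ^ n) * ∫⁻ y in ⋃ i ∈ u, Metric.closedBall (c i) (r i), g y := by
        rw [ENNReal.tsum_mul_left, lintegral_biUnion hcount (fun _ _ => Metric.isClosed_closedBall.measurableSet) hdis]
    _ ≤ _ := by gcongr; exact Measure.restrict_le_self

lemma max_lt_iff' {n : ℕ}
    (M : (EuclideanSpace ℝ (Fin n) → ℝ) → EuclideanSpace ℝ (Fin n) → ENNReal)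
    (hM : ∀ f x, M f x =
      ⨆ (c : EuclideanSpace ℝ (Fin n)) (r : ℝ) (_ : 0 < r) (_ : x ∈ Metric.ball c r),
        (volume (Metric.ball c r))⁻¹ * ∫⁻ y in Metric.ball c r, ENNReal.ofReal |f y|)
    (f : EuclideanSpace ℝ (Fin n) → ℝ) (x : EuclideanSpace ℝ (Fin n)) (a : ENNReal) :
    a < M f x ↔ ∃ c : EuclideanSpace ℝ (Fin n), ∃ r : ℝ, 0 < r ∧ x ∈ Metric.ball c r ∧
      a < (volume (Metric.ball c r))⁻¹ * ∫⁻ y in Metric.ball c r, ENNReal.ofReal |f y| := by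
  rw [hM]
  simp only [lt_iSup_iff, exists_prop]

lemma max_measurable {n : ℕ}
    (M : (EuclideanSpace ℝ (Fin n) → ℝ) → EuclideanSpace ℝ (Fin n) → ENNReal)
    (hM : ∀ f x, M f x =
      ⨆ (c : EuclideanSpace ℝ (Fin n)) (r : ℝ) (_ : 0 < r) (_ : x ∈ Metric.ball c r),
        (volume (Metric.ball c r))⁻¹ * ∫⁻ y in Metric.ball c r, ENNReal.ofReal |f y|)
    (f : EuclideanSpace ℝ (Fin n) → ℝ) : Measurable (M f) := by
  apply measurable_of_Ioi
  intro a
  apply IsOpen.measurableSet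
  rw [isOpen_iff_mem_nhds]
  intro x hx
  obtain ⟨c, r, hr, hxb, h⟩ := (max_lt_iff' M hM f x a).1 hx
  filter_upwards [Metric.isOpen_ball.mem_nhds hxb] with y hy
  exact (max_lt_iff' M hM f y a).2 ⟨c, r, hr, hy, h⟩

lemma max_weak {n : ℕ} (hn : 1 ≤ n)
    (M : (EuclideanSpace ℝ (Fin n) → ℝ) → EuclideanSpace ℝ (Fin n) → ENNReal)
    (hM : ∀ f x, M f x =
      ⨆ (c : EuclideanSpace ℝ (Fin n)) (r : ℝ) (_ : 0 < r) (_ : x ∈ Metric.ball c r),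
        (volume (Metric.ball c r))⁻¹ * ∫⁻ y in Metric.ball c r, ENNReal.ofReal |f y|)
    (f : EuclideanSpace ℝ (Fin n) → ℝ) {s : ℝ} (hs : 0 < s) :
    ENNReal.ofReal s * volume {x | ENNReal.ofReal (2 * s) < M f x} ≤
      ENNReal.ofReal (5 ^ n) *
        ∫⁻ y, Set.indicator {y | s < |f y|} (fun y => ENNReal.ofReal |f y|) y := by
  apply weak_cover hn _ _ (by simpa using hs) (by simp)
  intro x hx
  obtain ⟨c, r, hr, hxb, h⟩ := (max_lt_iff' M hM f x _).1 hx
  refine ⟨c, r, hr, hxb, ?_⟩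
  set W := volume (Metric.ball c r) with hW
  have hW0 : W ≠ 0 := vol_pos _ hr
  have hWt : W ≠ ⊤ := vol_fin _ _
  have h1 : ENNReal.ofReal (2 * s) * W ≤ ∫⁻ y in Metric.ball c r, ENNReal.ofReal |f y| := by
    rw [mul_comm (W⁻¹), ← div_eq_mul_inv] at h
    exact (ENNReal.le_div_iff_mul_le (Or.inl hW0) (Or.inl hWt)).1 h.le
  have h2 : ∫⁻ y in Metric.ball c r, ENNReal.ofReal |f y| ≤
      (∫⁻ y in Metric.ball c r, Set.indicator {y | s < |f y|} (fun y => ENNReal.ofReal |f y|) y)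
        + ENNReal.ofReal s * W := by
    rw [hW, ← setLIntegral_const, ← lintegral_add_right _ measurable_const]
    refine lintegral_mono fun y => ?_
    by_cases hy : s < |f y|
    · simp [Set.indicator, hy]
    · simp only [Set.indicator, Set.mem_ofPred_eq, hy, if_false, zero_add]
      exact ENNReal.ofReal_le_ofReal (not_lt.1 hy)
  have h3 := h1.trans h2
  rw [two_mul, ENNReal.ofReal_add hs.le hs.le, add_mul] at h3
  exact (ENNReal.add_le_add_iff_right (ENNReal.mul_ne_top (by simp) hWt)).1 h3

lemma Phi_lint {φ : ℝ → ℝ} (hφ : MonotoneOn φ (Set.Ici 0)) (hφ0 : ∀ x ≥ (0:ℝ), 0 ≤ φ x)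
    {t : ℝ} (ht : 0 ≤ t) :
    ∫⁻ s in Set.Ioc 0 t, ENNReal.ofReal (φ s) = ENNReal.ofReal (∫ s in (0:ℝ)..t, φ s) := by
  rw [intervalIntegral.integral_of_le ht, ofReal_integral_eq_lintegral_ofReal]
  · exact (intervalIntegrable_iff_integrableOn_Ioc_of_le ht).1 (mono_ii hφ le_rfl ht)
  · exact (ae_restrict_iff' measurableSet_Ioc).2
      (Filter.Eventually.of_forall fun x hx => hφ0 x hx.1.le)

lemma dyadic {φ Φ : ℝ → ℝ} (hφ : MonotoneOn φ (Set.Ici 0)) (hφ0 : ∀ x ≥ (0:ℝ), 0 ≤ φ x)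
    (hΦ : ∀ t, Φ t = ∫ s in (0:ℝ)..t, φ s) {l : ℝ} (hl : 1 < l)
    (hN : ∀ t ≥ (0:ℝ), 2 * l * Φ t ≤ Φ (l * t)) {t : ℝ} (ht : 0 < t) :
    ∫⁻ s in Set.Ioc 0 t, ENNReal.ofReal (φ s / s) ≤ ENNReal.ofReal (2 * l * Φ t / t) := by
  have hl0 : 0 < l := by linarith
  have hpow : ∀ k : ℕ, (2 * l) ^ k * Φ (t / l ^ k) ≤ Φ t := by
    intro k
    induction k with
    | zero => simp
    | succ k ih =>
      refine le_trans ?_ ih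
      have := hN (t / l ^ (k + 1)) (by positivity)
      have e : l * (t / l ^ (k + 1)) = t / l ^ k := by rw [pow_succ]; field_simp
      rw [e] at this
      calc (2 * l) ^ (k + 1) * Φ (t / l ^ (k + 1)) = (2 * l) ^ k * (2 * l * Φ (t / l ^ (k + 1))) := by ring
        _ ≤ _ := by gcongr
  have hsub : Set.Ioc 0 t ⊆ ⋃ k : ℕ, Set.Ioc (t / l ^ (k + 1)) (t / l ^ k) := by
    intro s hs
    have hs0 := hs.1
    obtain ⟨k, h1, h2⟩ := exists_nat_pow_near (x := t / s) (y := l) ((one_le_div hs.1).2 hs.2) hl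
    refine Set.mem_iUnion.2 ⟨k, ?_, ?_⟩
    · rw [div_lt_iff₀ (by positivity)]
      rw [div_lt_iff₀ hs0] at h2
      linarith
    · rw [le_div_iff₀ (by positivity)]
      rw [le_div_iff₀ hs0] at h1
      linarith
  have hΦ0 : 0 ≤ Φ t := by rw [hΦ]; exact int_nonneg hφ0 ht.le
  have piece : ∀ k : ℕ, ∫⁻ s in Set.Ioc (t / l ^ (k + 1)) (t / l ^ k), ENNReal.ofReal (φ s / s) ≤
      ENNReal.ofReal (l * Φ t / t * (1 / 2) ^ k) := by
    intro k
    have ha : 0 < t / l ^ k := by positivity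
    calc ∫⁻ s in Set.Ioc (t / l ^ (k + 1)) (t / l ^ k), ENNReal.ofReal (φ s / s)
        ≤ ∫⁻ s in Set.Ioc (t / l ^ (k + 1)) (t / l ^ k),
            ENNReal.ofReal (l ^ (k + 1) / t) * ENNReal.ofReal (φ s) := by
          refine setLIntegral_mono' measurableSet_Ioc fun s hs => ?_
          have hs0 : 0 < s := lt_trans (by positivity) hs.1
          rw [← ENNReal.ofReal_mul (by positivity)]
          apply ENNReal.ofReal_le_ofReal
          have h1 := hs.1
          rw [div_lt_iff₀ (by positivity)] at h1
          rw [div_mul_eq_mul_div, div_le_div_iff₀ hs0 ht]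
          have := mul_le_mul_of_nonneg_left h1.le (hφ0 s hs0.le)
          linarith
      _ ≤ ∫⁻ s in Set.Ioc 0 (t / l ^ k),
            ENNReal.ofReal (l ^ (k + 1) / t) * ENNReal.ofReal (φ s) :=
          lintegral_mono_set (Set.Ioc_subset_Ioc_left (by positivity))
      _ = ENNReal.ofReal (l ^ (k + 1) / t * Φ (t / l ^ k)) := by
          rw [lintegral_const_mul' _ _ (by simp), Phi_lint hφ hφ0 ha.le, ← hΦ,
            ENNReal.ofReal_mul (by positivity)]
      _ ≤ _ := by
          apply ENNReal.ofReal_le_ofReal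
          have := hpow k
          have h5 : Φ (t / l ^ k) ≤ Φ t / (2 * l) ^ k := by
            rw [le_div_iff₀ (by positivity)]; linarith
          calc l ^ (k + 1) / t * Φ (t / l ^ k) ≤ l ^ (k + 1) / t * (Φ t / (2 * l) ^ k) := by gcongr
            _ = _ := by rw [mul_pow, div_pow]; field_simp; ring
  calc _ ≤ ∫⁻ s in ⋃ k : ℕ, Set.Ioc (t / l ^ (k + 1)) (t / l ^ k), ENNReal.ofReal (φ s / s) :=
        lintegral_mono_set hsub
    _ ≤ ∑' k : ℕ, ∫⁻ s in Set.Ioc (t / l ^ (k + 1)) (t / l ^ k), ENNReal.ofReal (φ s / s) :=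
        lintegral_iUnion_le _ _
    _ ≤ ∑' k : ℕ, ENNReal.ofReal (l * Φ t / t * (1 / 2) ^ k) := ENNReal.tsum_le_tsum piece
    _ = ENNReal.ofReal (∑' k : ℕ, (l * Φ t / t * (1 / 2) ^ k)) :=
        (ENNReal.ofReal_tsum_of_nonneg (fun k => by positivity)
          (summable_geometric_two.mul_left _)).symm
    _ = _ := by
        rw [tsum_mul_left, tsum_geometric_two]; congr 1; ring

lemma backward {n : ℕ} (hn : 1 ≤ n) {φ Φ : ℝ → ℝ}
    (hφ : MonotoneOn φ (Set.Ici 0)) (hφ0 : ∀ x ≥ (0:ℝ), 0 ≤ φ x)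
    (hΦ : ∀ t, Φ t = ∫ s in (0:ℝ)..t, φ s) {l : ℝ} (hl : 1 < l)
    (hN : ∀ t ≥ (0:ℝ), 2 * l * Φ t ≤ Φ (l * t))
    (M : (EuclideanSpace ℝ (Fin n) → ℝ) → EuclideanSpace ℝ (Fin n) → ENNReal)
    (hM : ∀ f x, M f x =
      ⨆ (c : EuclideanSpace ℝ (Fin n)) (r : ℝ) (_ : 0 < r) (_ : x ∈ Metric.ball c r),
        (volume (Metric.ball c r))⁻¹ * ∫⁻ y in Metric.ball c r, ENNReal.ofReal |f y|)
    (f : EuclideanSpace ℝ (Fin n) → ℝ) (hf : Measurable f) :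
    ∫⁻ x, ENNReal.ofReal (Φ (1 / 2 * (M f x).toReal))
        ≤ ENNReal.ofReal (5 ^ n * (2 * l)) * ∫⁻ x, ENNReal.ofReal (Φ |f x|) := by
  have hmφ : Measurable (fun x => φ (max x 0)) := (mono_ext hφ).measurable
  have hmM := max_measurable M hM f
  have hl0 : 0 < l := by linarith
  calc ∫⁻ x, ENNReal.ofReal (Φ (1 / 2 * (M f x).toReal))
      = ∫⁻ t in Set.Ioi 0, volume {x | t < 1 / 2 * (M f x).toReal} * ENNReal.ofReal (φ t) := by
        simp only [hΦ]
        refine lintegral_comp_eq_lintegral_meas_lt_mul volume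
          (f := fun x => 1 / 2 * (M f x).toReal) (g := φ) ?_ ?_ ?_ ?_
        · exact Filter.Eventually.of_forall fun x => by simp
        · exact (hmM.ennreal_toReal.const_mul _).aemeasurable
        · intro t ht; exact mono_ii hφ le_rfl ht.le
        · exact (ae_restrict_iff' measurableSet_Ioi).2
            (Filter.Eventually.of_forall fun x hx => hφ0 x (le_of_lt hx))
    _ ≤ ∫⁻ t in Set.Ioi 0, ∫⁻ y, ENNReal.ofReal (5 ^ n) * (ENNReal.ofReal (φ (max t 0) / t) *
          Set.indicator {p : ℝ × EuclideanSpace ℝ (Fin n) | p.1 < |f p.2|}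
            (fun p => ENNReal.ofReal |f p.2|) (t, y)) := by
        refine setLIntegral_mono' measurableSet_Ioi fun t ht => ?_
        have ht : 0 < t := ht
        rw [lintegral_const_mul' _ _ (by simp), lintegral_const_mul' _ _ (by simp),
          max_eq_left ht.le]
        have hsub : {x | t < 1 / 2 * (M f x).toReal} ⊆ {x | ENNReal.ofReal (2 * t) < M f x} := by
          intro x hx
          simp only [Set.mem_ofPred_eq] at hx ⊢
          apply lt_of_lt_of_le _ ENNReal.ofReal_toReal_le
          rw [ENNReal.ofReal_lt_ofReal_iff] <;> linarith
        have hw := max_weak hn M hM f ht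
        have e : ENNReal.ofReal (φ t) = ENNReal.ofReal t * ENNReal.ofReal (φ t / t) := by
          rw [← ENNReal.ofReal_mul ht.le]; congr 1; field_simp
        calc _ ≤ volume {x | ENNReal.ofReal (2 * t) < M f x} * ENNReal.ofReal (φ t) := by
              gcongr
          _ = ENNReal.ofReal (φ t / t) * (ENNReal.ofReal t * volume {x | ENNReal.ofReal (2 * t) < M f x}) := by
              rw [e]; ring
          _ ≤ ENNReal.ofReal (φ t / t) * (ENNReal.ofReal (5 ^ n) *
                ∫⁻ y, Set.indicator {y | t < |f y|} (fun y => ENNReal.ofReal |f y|) y) := by gcongr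
          _ = _ := by
              rw [mul_left_comm]; rfl
    _ = ∫⁻ y, ∫⁻ t in Set.Ioi 0, ENNReal.ofReal (5 ^ n) * (ENNReal.ofReal (φ (max t 0) / t) *
          Set.indicator {p : ℝ × EuclideanSpace ℝ (Fin n) | p.1 < |f p.2|}
            (fun p => ENNReal.ofReal |f p.2|) (t, y)) := by
        apply lintegral_lintegral_swap
        apply Measurable.aemeasurable
        apply Measurable.const_mul
        apply Measurable.mul
        · exact ((hmφ.comp measurable_fst).div measurable_fst).ennreal_ofReal
        · apply Measurable.indicator
          · exact (hf.comp measurable_snd).abs.ennreal_ofReal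
          · exact measurableSet_lt measurable_fst (hf.comp measurable_snd).abs
    _ ≤ ∫⁻ y, ENNReal.ofReal (5 ^ n * (2 * l)) * ENNReal.ofReal (Φ |f y|) := by
        refine lintegral_mono fun y => ?_
        rw [lintegral_const_mul' _ _ (by simp), ENNReal.ofReal_mul (by positivity), mul_assoc]
        gcongr
        rcases (abs_nonneg (f y)).eq_or_lt with h0 | h0
        · have : ∫⁻ t in Set.Ioi 0, (ENNReal.ofReal (φ (max t 0) / t) *
              Set.indicator {p : ℝ × EuclideanSpace ℝ (Fin n) | p.1 < |f p.2|}
              (fun p => ENNReal.ofReal |f p.2|) (t, y)) = 0 := by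
            simp [Set.indicator, ← h0]
          rw [this]; exact zero_le
        · calc ∫⁻ t in Set.Ioi 0, (ENNReal.ofReal (φ (max t 0) / t) *
              Set.indicator {p : ℝ × EuclideanSpace ℝ (Fin n) | p.1 < |f p.2|}
              (fun p => ENNReal.ofReal |f p.2|) (t, y))
              ≤ ∫⁻ t in Set.Ioi 0, Set.indicator (Set.Ioc 0 |f y|)
                  (fun t => ENNReal.ofReal |f y| * ENNReal.ofReal (φ t / t)) t := by
                refine setLIntegral_mono' measurableSet_Ioi fun t ht => ?_
                have ht : 0 < t := ht
                by_cases h : t < |f y|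
                · simp [Set.indicator, h, ht, h.le, max_eq_left ht.le, mul_comm]
                · simp [Set.indicator, h]
            _ ≤ ∫⁻ t, Set.indicator (Set.Ioc 0 |f y|)
                  (fun t => ENNReal.ofReal |f y| * ENNReal.ofReal (φ t / t)) t :=
                setLIntegral_le_lintegral _ _
            _ = ENNReal.ofReal |f y| * ∫⁻ t in Set.Ioc 0 |f y|, ENNReal.ofReal (φ t / t) := by
                rw [lintegral_indicator measurableSet_Ioc, lintegral_const_mul' _ _ (by simp)]
            _ ≤ ENNReal.ofReal |f y| * ENNReal.ofReal (2 * l * Φ |f y| / |f y|) := by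
                gcongr; exact dyadic hφ hφ0 hΦ hl hN h0
            _ = _ := by
                rw [← ENNReal.ofReal_mul h0.le, ← ENNReal.ofReal_mul (by positivity)]
                congr 1; field_simp
    _ = _ := lintegral_const_mul' _ _ ENNReal.ofReal_ne_top

lemma Phi_scale {φ Φ : ℝ → ℝ} (hφ : MonotoneOn φ (Set.Ici 0))
    (hΦ : ∀ t, Φ t = ∫ s in (0:ℝ)..t, φ s) {θ x : ℝ} (h0 : 0 ≤ θ) (h1 : θ ≤ 1) (hx : 0 ≤ x) :
    Φ (θ * x) ≤ θ * Φ x := by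
  rw [hΦ, hΦ]
  have := intervalIntegral.mul_integral_comp_mul_left (f := φ) (a := 0) (b := x) θ
  rw [mul_zero] at this
  rw [← this]
  apply mul_le_mul_of_nonneg_left _ h0
  have hm : MonotoneOn (fun u => φ (θ * u)) (Set.Ici 0) := fun a ha b hb hab =>
    hφ (mul_nonneg h0 ha) (mul_nonneg h0 hb) (mul_le_mul_of_nonneg_left hab h0)
  apply intervalIntegral.integral_mono_on hx (mono_ii hm le_rfl hx) (mono_ii hφ le_rfl hx)
  intro u hu
  exact hφ (mul_nonneg h0 hu.1) hu.1 (mul_le_of_le_one_left hu.1 h1)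

lemma Phi_mono {φ Φ : ℝ → ℝ} (hφ : MonotoneOn φ (Set.Ici 0)) (hφ0 : ∀ x ≥ (0:ℝ), 0 ≤ φ x)
    (hΦ : ∀ t, Φ t = ∫ s in (0:ℝ)..t, φ s) {x y : ℝ} (hx : 0 ≤ x) (hxy : x ≤ y) :
    Φ x ≤ Φ y := by
  have hy := hx.trans hxy
  rw [hΦ, hΦ, ← intervalIntegral.integral_add_adjacent_intervals (mono_ii hφ le_rfl hx)
    (mono_ii hφ hx hy)]
  have := intervalIntegral.integral_nonneg (f := φ) (μ := volume) hxy (fun u hu => hφ0 u (hx.trans hu.1))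
  linarith

lemma forward {n : ℕ} (hn : 1 ≤ n) {φ Φ : ℝ → ℝ}
    (hφ : MonotoneOn φ (Set.Ici 0)) (hφ0 : ∀ x ≥ (0:ℝ), 0 ≤ φ x)
    (hΦ : ∀ t, Φ t = ∫ s in (0:ℝ)..t, φ s)
    (M : (EuclideanSpace ℝ (Fin n) → ℝ) → EuclideanSpace ℝ (Fin n) → ENNReal)
    (hM : ∀ f x, M f x =
      ⨆ (c : EuclideanSpace ℝ (Fin n)) (r : ℝ) (_ : 0 < r) (_ : x ∈ Metric.ball c r),
        (volume (Metric.ball c r))⁻¹ * ∫⁻ y in Metric.ball c r, ENNReal.ofReal |f y|)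
    {C b : ℝ} (hC : 0 < C) (hb : 0 < b)
    (H : ∀ f : EuclideanSpace ℝ (Fin n) → ℝ, Measurable f →
      (∃ a > (0:ℝ), ∫⁻ x, ENNReal.ofReal (Φ (a * |f x|)) < ⊤) →
      ∫⁻ x, ENNReal.ofReal (Φ (b * (M f x).toReal))
        ≤ ENNReal.ofReal C * ∫⁻ x, ENNReal.ofReal (Φ |f x|)) :
    ∃ l > (0:ℝ), ∀ t ≥ (0:ℝ), 2 * l * Φ t ≤ Φ (l * t) := by
  obtain ⟨N, hN⟩ := exists_nat_ge (4 * C / b)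
  refine ⟨2 ^ (N * n) / b, by positivity, fun s hs => ?_⟩
  set V := volume (Metric.ball (0 : EuclideanSpace ℝ (Fin n)) 1) with hV
  have hV0 : V ≠ 0 := vol_pos _ one_pos
  have hVt : V ≠ ⊤ := vol_fin _ _
  set t := 2 ^ (N * n) / b * s with ht_def
  have ht : 0 ≤ t := by positivity
  have hΦn : ∀ x ≥ (0:ℝ), 0 ≤ Φ x := fun x hx => by rw [hΦ]; exact int_nonneg hφ0 hx
  have hΦ00 : Φ 0 = 0 := by rw [hΦ]; simp
  let f : EuclideanSpace ℝ (Fin n) → ℝ := Set.indicator (Metric.ball 0 1) (fun _ => t)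
  have hfm : Measurable f := measurable_const.indicator Metric.isOpen_ball.measurableSet
  have hfabs : ∀ x, |f x| = Set.indicator (Metric.ball 0 1) (fun _ => t) x := by
    intro x
    by_cases h : x ∈ Metric.ball (0 : EuclideanSpace ℝ (Fin n)) 1
    · simp only [f, Set.indicator_of_mem h, abs_of_nonneg ht]
    · simp only [f, Set.indicator_of_notMem h, abs_zero]
  have hint : ∫⁻ x, ENNReal.ofReal (Φ |f x|) = ENNReal.ofReal (Φ t) * V := by
    rw [hV, ← lintegral_indicator_const Metric.isOpen_ball.measurableSet]
    refine lintegral_congr fun x => ?_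
    rw [hfabs]
    by_cases h : x ∈ Metric.ball (0 : EuclideanSpace ℝ (Fin n)) 1
    · simp only [Set.indicator_of_mem h]
    · simp only [Set.indicator_of_notMem h, hΦ00, ENNReal.ofReal_zero]
  have hH := H f hfm ⟨1, one_pos, by
    simp only [one_mul]; rw [hint]; exact ENNReal.mul_lt_top (by simp) hVt.lt_top⟩
  rw [hint] at hH
  have hfin : ∀ x, M f x ≠ ⊤ := by
    intro x
    apply ne_top_of_le_ne_top (b := ENNReal.ofReal t) (by simp)
    rw [hM]
    refine iSup_le fun c => iSup_le fun r => iSup_le fun hr => iSup_le fun _ => ?_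
    calc _ ≤ (volume (Metric.ball c r))⁻¹ * ∫⁻ y in Metric.ball c r, ENNReal.ofReal t := by
          gcongr with y
          rw [hfabs]
          exact Set.indicator_le_self' (fun _ _ => ht) _
      _ = ENNReal.ofReal t := by
          rw [setLIntegral_const, mul_left_comm, ENNReal.inv_mul_cancel (vol_pos _ hr) (vol_fin _ _), mul_one]
  have hlow : ∀ R ≥ (1:ℝ), ∀ x ∈ Metric.ball (0 : EuclideanSpace ℝ (Fin n)) R,
      t / R ^ n ≤ (M f x).toReal := by
    intro R hR x hx
    have hR0 : 0 < R := by linarith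
    rw [← ENNReal.ofReal_le_iff_le_toReal (hfin x), hM]
    refine le_trans ?_ (le_iSup_of_le 0 (le_iSup_of_le R (le_iSup_of_le hR0 (le_iSup_of_le hx le_rfl))))
    have e : ∫⁻ y in Metric.ball (0 : EuclideanSpace ℝ (Fin n)) R, ENNReal.ofReal |f y|
        = ENNReal.ofReal t * V := by
      rw [hV, ← setLIntegral_const]
      have : ∀ y, ENNReal.ofReal |f y| = Set.indicator (Metric.ball 0 1) (fun _ => ENNReal.ofReal t) y := by
        intro y
        rw [hfabs]
        by_cases h : y ∈ Metric.ball (0 : EuclideanSpace ℝ (Fin n)) 1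
        · simp only [Set.indicator_of_mem h]
        · simp only [Set.indicator_of_notMem h, ENNReal.ofReal_zero]
      simp only [this]
      rw [setLIntegral_indicator Metric.isOpen_ball.measurableSet,
        Set.inter_eq_left.2 (Metric.ball_subset_ball hR)]
    rw [e, vol_ball' _ hR0, ENNReal.mul_inv (Or.inr hVt) (Or.inr hV0)]
    rw [ENNReal.ofReal_div_of_pos (by positivity), div_eq_mul_inv]
    apply le_of_eq
    calc _ = (ENNReal.ofReal (R ^ n))⁻¹ * ENNReal.ofReal t * (V⁻¹ * V) := by
          rw [ENNReal.inv_mul_cancel hV0 hVt, mul_one, mul_comm]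
      _ = _ := by ring
  let A : ℕ → Set (EuclideanSpace ℝ (Fin n)) := fun k =>
    Metric.ball 0 (2 ^ (k + 1)) \ Metric.ball 0 (2 ^ k)
  have hAm : ∀ k, MeasurableSet (A k) := fun k =>
    Metric.isOpen_ball.measurableSet.diff Metric.isOpen_ball.measurableSet
  have hAd : Pairwise (Function.onFun Disjoint A) := by
    have key : ∀ i j : ℕ, i < j → Disjoint (A i) (A j) := by
      intro i j hij
      rw [Set.disjoint_left]
      intro x hx hx'
      exact hx'.2 (Metric.ball_subset_ball (pow_le_pow_right₀ (by norm_num) hij) hx.1)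
    intro i j hij
    rcases lt_or_gt_of_ne hij with h | h
    · exact key i j h
    · exact (key j i h).symm
  have hAv : ∀ k, ENNReal.ofReal (2 ^ ((k + 1) * n) / 2) * V ≤ volume (A k) := by
    intro k
    have h1 := le_measure_sdiff (μ := volume) (s₁ := Metric.ball (0 : EuclideanSpace ℝ (Fin n)) (2 ^ (k + 1)))
      (s₂ := Metric.ball (0 : EuclideanSpace ℝ (Fin n)) (2 ^ k))
    refine le_trans ?_ h1
    rw [vol_ball' _ (by positivity : (0:ℝ) < 2 ^ (k + 1)),
      vol_ball' _ (by positivity : (0:ℝ) < 2 ^ k), ← ENNReal.sub_mul (fun _ _ => hVt),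
      ← ENNReal.ofReal_sub _ (by positivity)]
    gcongr
    rw [← pow_mul, ← pow_mul]
    have : (2:ℝ) ^ (k * n) * 2 ≤ 2 ^ ((k + 1) * n) := by
      rw [← pow_succ]
      apply pow_le_pow_right₀ (by norm_num)
      rw [add_mul]; omega
    linarith
  have hterm : ∀ k ∈ Finset.range N, ENNReal.ofReal (Φ s * 2 ^ (N * n) / 2) * V ≤
      ∫⁻ x in A k, ENNReal.ofReal (Φ (b * (M f x).toReal)) := by
    intro k hk
    have hk : k < N := Finset.mem_range.1 hk
    have hp : (2:ℝ) ^ ((k + 1) * n) ≤ 2 ^ (N * n) :=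
      pow_le_pow_right₀ (by norm_num) (Nat.mul_le_mul_right n hk)
    have hsc : Φ s * 2 ^ (N * n) ≤ Φ (b * (t / 2 ^ ((k + 1) * n))) * 2 ^ ((k + 1) * n) := by
      have := Phi_scale hφ hΦ (θ := 2 ^ ((k + 1) * n) / 2 ^ (N * n)) (x := b * (t / 2 ^ ((k + 1) * n)))
        (by positivity) ((div_le_one (by positivity)).2 hp) (by positivity)
      have e : (2:ℝ) ^ ((k + 1) * n) / 2 ^ (N * n) * (b * (t / 2 ^ ((k + 1) * n))) = s := by
        rw [ht_def]; field_simp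
      rw [e, div_mul_eq_mul_div, le_div_iff₀ (by positivity)] at this
      linarith
    calc ENNReal.ofReal (Φ s * 2 ^ (N * n) / 2) * V
        ≤ ENNReal.ofReal (Φ (b * (t / 2 ^ ((k + 1) * n))) * (2 ^ ((k + 1) * n) / 2)) * V := by
          gcongr; linarith
      _ = ENNReal.ofReal (Φ (b * (t / 2 ^ ((k + 1) * n)))) * (ENNReal.ofReal (2 ^ ((k + 1) * n) / 2) * V) := by
          rw [ENNReal.ofReal_mul (hΦn _ (by positivity)), mul_assoc]
      _ ≤ ENNReal.ofReal (Φ (b * (t / 2 ^ ((k + 1) * n)))) * volume (A k) := by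
          gcongr; exact hAv k
      _ = ∫⁻ x in A k, ENNReal.ofReal (Φ (b * (t / 2 ^ ((k + 1) * n)))) := (setLIntegral_const _ _).symm
      _ ≤ _ := by
          refine setLIntegral_mono' (hAm k) fun x hx => ?_
          apply ENNReal.ofReal_le_ofReal
          apply Phi_mono hφ hφ0 hΦ (by positivity)
          have := hlow (2 ^ (k + 1)) (one_le_pow₀ (by norm_num)) x hx.1
          rw [← pow_mul] at this
          gcongr
  have hsum : (N : ENNReal) * (ENNReal.ofReal (Φ s * 2 ^ (N * n) / 2) * V) ≤
      ENNReal.ofReal C * (ENNReal.ofReal (Φ t) * V) := by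
    calc _ = ∑ k ∈ Finset.range N, ENNReal.ofReal (Φ s * 2 ^ (N * n) / 2) * V := by simp
      _ ≤ ∑ k ∈ Finset.range N, ∫⁻ x in A k, ENNReal.ofReal (Φ (b * (M f x).toReal)) :=
          Finset.sum_le_sum hterm
      _ = ∫⁻ x in ⋃ k ∈ Finset.range N, A k, ENNReal.ofReal (Φ (b * (M f x).toReal)) :=
          (lintegral_biUnion_finset (fun i _ j _ hij => hAd hij) (fun k _ => hAm k) _).symm
      _ ≤ ∫⁻ x, ENNReal.ofReal (Φ (b * (M f x).toReal)) := setLIntegral_le_lintegral _ _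
      _ ≤ _ := hH
  rw [← mul_assoc, ← mul_assoc, ENNReal.mul_le_mul_iff_left hV0 hVt, ← ENNReal.ofReal_natCast,
    ← ENNReal.ofReal_mul (by positivity), ← ENNReal.ofReal_mul hC.le,
    ENNReal.ofReal_le_ofReal_iff (mul_nonneg hC.le (hΦn t ht))] at hsum
  have hP : 0 ≤ Φ s * 2 ^ (N * n) / 2 := by have := hΦn s hs; positivity
  have h6 : 4 * C / b * (Φ s * 2 ^ (N * n) / 2) ≤ C * Φ t :=
    (mul_le_mul_of_nonneg_right hN hP).trans hsum
  have h7 : C * (2 * (2 ^ (N * n) / b) * Φ s) ≤ C * Φ t := by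
    refine le_trans (le_of_eq ?_) h6
    field_simp
    ring
  exact le_of_mul_le_mul_left h7 hC

theorem stmt_18 (n : ℕ) (hn : 1 ≤ n)
    (φd ψd Φ Ψ : ℝ → ℝ)
    (hφd_mono : MonotoneOn φd (Set.Ici 0))
    (hφd_rc : ∀ t ≥ (0:ℝ), ContinuousWithinAt φd (Set.Ici t) t)
    (hφd0 : φd 0 = 0)
    (hφd_top : Filter.Tendsto φd Filter.atTop Filter.atTop)
    (hΦ : ∀ t, Φ t = ∫ s in (0:ℝ)..t, φd s)
    (hψd : ∀ t, ψd t = sSup {s : ℝ | 0 ≤ s ∧ φd s ≤ t})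
    (hΨ : ∀ t, Ψ t = ∫ s in (0:ℝ)..t, ψd s)
    (M : (EuclideanSpace ℝ (Fin n) → ℝ) → EuclideanSpace ℝ (Fin n) → ENNReal)
    (hM : ∀ f x, M f x =
      ⨆ (c : EuclideanSpace ℝ (Fin n)) (r : ℝ) (_ : 0 < r) (_ : x ∈ Metric.ball c r),
        (volume (Metric.ball c r))⁻¹ * ∫⁻ y in Metric.ball c r, ENNReal.ofReal |f y|) :
    (∃ C > (0:ℝ), ∃ b > (0:ℝ), ∀ f : EuclideanSpace ℝ (Fin n) → ℝ, Measurable f →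
      (∃ a > (0:ℝ), ∫⁻ x, ENNReal.ofReal (Φ (a * |f x|)) < ⊤) →
      ∫⁻ x, ENNReal.ofReal (Φ (b * (M f x).toReal))
        ≤ ENNReal.ofReal C * ∫⁻ x, ENNReal.ofReal (Φ |f x|))
    ↔ (∃ CΨ > (0:ℝ), ∀ t ≥ (0:ℝ), Ψ (2 * t) ≤ CΨ * Ψ t) := by
  have hφ0 : ∀ x ≥ (0:ℝ), 0 ≤ φd x := fun x hx => by
    rw [← hφd0]; exact hφd_mono (Set.mem_Ici.2 le_rfl) hx hx
  have hbdd : ∀ t, BddAbove {s : ℝ | 0 ≤ s ∧ φd s ≤ t} := by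
    intro t
    obtain ⟨K, hK⟩ := Filter.eventually_atTop.1 (hφd_top.eventually_gt_atTop t)
    refine ⟨K, fun s hs => ?_⟩
    by_contra h
    push Not at h
    exact absurd hs.2 (not_le.2 (hK s h.le))
  have hmem0 : ∀ t ≥ (0:ℝ), (0:ℝ) ∈ {s : ℝ | 0 ≤ s ∧ φd s ≤ t} := fun t ht =>
    ⟨le_rfl, by rw [hφd0]; exact ht⟩
  have hψ0 : ∀ x ≥ (0:ℝ), 0 ≤ ψd x := fun x hx => by
    rw [hψd]; exact le_csSup (hbdd x) (hmem0 x hx)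
  have hψ_mono : MonotoneOn ψd (Set.Ici 0) := by
    intro a ha b hb hab
    rw [hψd, hψd]
    exact csSup_le_csSup (hbdd b) ⟨0, hmem0 a ha⟩ (fun s hs => ⟨hs.1, hs.2.trans hab⟩)
  have h1 : ∀ x ≥ (0:ℝ), ∀ y ≥ (0:ℝ), φd x ≤ y → x ≤ ψd y := by
    intro x hx y _ h
    rw [hψd]; exact le_csSup (hbdd y) ⟨hx, h⟩
  have h2 : ∀ x ≥ (0:ℝ), ∀ y ≥ (0:ℝ), x < ψd y → φd x ≤ y := by
    intro x hx y hy h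
    rw [hψd] at h
    obtain ⟨u, hu, hxu⟩ := exists_lt_of_lt_csSup ⟨0, hmem0 y hy⟩ h
    exact (hφd_mono hx hu.1 hxu.le).trans hu.2
  have Y : ∀ s ≥ (0:ℝ), ∀ t ≥ (0:ℝ), t * s ≤ Φ t + Ψ s := by
    intro s hs t ht
    rw [hΦ, hΨ]; exact young_le hφd_mono hψ_mono hφ0 hψ0 h1 hs ht
  have E1 : ∀ s ≥ (0:ℝ), Φ (ψd s) + Ψ s ≤ ψd s * s := by
    intro s hs
    rw [hΦ, hΨ]
    exact young_ge hφd_mono hψ_mono hφ0 hψ0 h2 hs (hψ0 s hs) (fun x hx h => h2 x hx s hs h)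
      (fun y hy h => hψ_mono hy hs h.le)
  have E2 : ∀ t ≥ (0:ℝ), Φ t + Ψ (φd t) ≤ t * φd t := by
    intro t ht
    rw [hΦ, hΨ]
    refine young_ge hφd_mono hψ_mono hφ0 hψ0 h2 (hφ0 t ht) ht
      (fun x hx h => hφd_mono hx ht h.le) (fun y hy h => ?_)
    rw [hψd]
    refine csSup_le ⟨0, hmem0 y hy⟩ (fun u hu => ?_)
    by_contra hc
    push Not at hc
    have := hφd_mono ht hu.1 hc.le
    linarith [hu.2]
  constructor
  · rintro ⟨C, hC, b, hb, H⟩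
    obtain ⟨l, hl, hN⟩ := forward hn hφd_mono hφ0 hΦ M hM hC hb H
    refine ⟨2 * l, by positivity, fun s hs => ?_⟩
    have hu := hψ0 (2 * s) (by positivity)
    set u := ψd (2 * s) with hu_def
    have e1 := E1 (2 * s) (by positivity)
    rw [← hu_def] at e1
    have e2 := Y s hs (u / l) (by positivity)
    have e3 := hN (u / l) (by positivity)
    rw [mul_div_cancel₀ u hl.ne'] at e3
    have e4 := mul_le_mul_of_nonneg_left e2 (by positivity : 0 ≤ 2 * l)
    have e5 : 2 * l * (u / l * s) = u * (2 * s) := by field_simp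
    rw [e5] at e4
    linarith
  · rintro ⟨K, hK, H⟩
    have hΨ0 : ∀ x ≥ (0:ℝ), 0 ≤ Ψ x := fun x hx => by rw [hΨ]; exact int_nonneg hψ0 hx
    obtain ⟨l, hl, hKl⟩ : ∃ l : ℝ, 1 < l ∧ K ≤ 2 * l :=
      ⟨max K 2, lt_of_lt_of_le (by norm_num) (le_max_right _ _), by
        have := le_max_left K 2; linarith⟩
    have hN : ∀ t ≥ (0:ℝ), 2 * l * Φ t ≤ Φ (l * t) := by
      intro t ht
      have hs := hφ0 t ht
      set s := φd t with hs_def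
      have e1 := E2 t ht
      rw [← hs_def] at e1
      have e2 := Y (2 * s) (by positivity) (l * t) (by positivity)
      have e3 := (H s hs).trans (mul_le_mul_of_nonneg_right hKl (hΨ0 s hs))
      have e4 := mul_le_mul_of_nonneg_left e1 (by positivity : 0 ≤ 2 * l)
      nlinarith
    exact ⟨5 ^ n * (2 * l), by positivity, 1 / 2, by norm_num, fun f hf _ =>
      backward hn hφd_mono hφ0 hΦ hl hN M hM f hf⟩
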